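/- Let X be an n×p real matrix with orthonormal columns (XᵀX = I_p), let y ∈ ℝ^n, σ > 0, and set z_j := ⟨y, X_j⟩. Assume the values |z_1|,…,|z_p| are pairwise distinct. For 1 ≤ k ≤ p, let λ̂_k be the k-th largest value among |z_1|,…,|z_p| and let Â_k ⊆ {1,…,p} be the set of indices of the k largest values of |z_j| (with Â_0 := ∅). Then for every 1 ≤ k ≤ p−1, the covariance test statistic satisfies T_k := T(Â_{k−1}, λ̂_{k+1}) = (λ̂_k² − λ̂_k λ̂_{k+1}) / σ². -/

import Mathlib

open scoped BigOperators

noncomputable section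

/-- Euclidean inner product on `Fin n → ℝ`. -/
def ip {n : ℕ} (a b : Fin n → ℝ) : ℝ := ∑ i, a i * b i

/-- Squared Euclidean norm on `Fin n → ℝ`. -/
def sqnorm {n : ℕ} (a : Fin n → ℝ) : ℝ := ∑ i, (a i) ^ 2

/-!
For an orthonormal family `x` the lasso objective splits into one scalar problem per coordinate,
`½ β_j² - β_j z_j + λ |β_j|` with `z_j = ⟪y, x_j⟫`, solved by soft thresholding. Substituting the
solution, the functional `‖y - ∑ β_j x_j‖² + λ ∑ |β_j|` takes the value
`‖y‖² - ∑ |z_j| (|z_j| - λ)⁺`. At `λ = λ̂_{k+1}` only the top `k` coordinates contribute, so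
deleting all coordinates outside the top `k - 1` costs exactly the `k`-th term
`λ̂_k (λ̂_k - λ̂_{k+1})`.
-/

/-- The soft-thresholding operator at level `l`, which solves the scalar lasso problem. -/
def softThreshold (l z : ℝ) : ℝ := SignType.sign z * max (|z| - l) 0

section SoftThreshold

variable {l : ℝ}

theorem softThreshold_mul_self (l z : ℝ) : softThreshold l z * z = |z| * max (|z| - l) 0 := by
  rw [softThreshold, mul_right_comm, sign_mul_self]

theorem abs_softThreshold (hl : 0 ≤ l) (z : ℝ) : |softThreshold l z| = max (|z| - l) 0 := by
  rcases eq_or_ne z 0 with rfl | hz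
  · simp [softThreshold, hl]
  · have abs_sign : |(SignType.sign z : ℝ)| = 1 := by
      rcases hz.lt_or_gt with hz | hz <;> simp [hz]
    rw [softThreshold, abs_mul, abs_sign, one_mul, abs_of_nonneg (le_max_right _ _)]

theorem softThreshold_sq (hl : 0 ≤ l) (z : ℝ) :
    softThreshold l z ^ 2 = max (|z| - l) 0 ^ 2 := by
  rw [← sq_abs, abs_softThreshold hl]

theorem abs_sub_softThreshold_le (hl : 0 ≤ l) (z : ℝ) : |z - softThreshold l z| ≤ l := by
  rcases le_total |z| l with h | h
  · simp [softThreshold, h]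
  · have residual_eq : z - softThreshold l z = SignType.sign z * l := by
      rw [softThreshold, max_eq_left (sub_nonneg.2 h), mul_sub, sign_mul_abs, sub_sub_cancel]
    rw [residual_eq, abs_mul, abs_of_nonneg hl]
    refine mul_le_of_le_one_left hl ?_
    cases SignType.sign z <;> simp

theorem sub_softThreshold_mul_softThreshold (hl : 0 ≤ l) (z : ℝ) :
    (z - softThreshold l z) * softThreshold l z = l * |softThreshold l z| := by
  rw [sub_mul, mul_comm z, softThreshold_mul_self, ← sq, softThreshold_sq hl, abs_softThreshold hl]
  rcases max_choice (|z| - l) 0 with h | h <;> rw [h] <;> ring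

-- `z - s` is a subgradient of `l * |·|` at `s = softThreshold l z`; the square is the strong
-- convexity gain, which makes the minimizer unique.
theorem scalar_lasso_softThreshold_add_sq_le (hl : 0 ≤ l) (z t : ℝ) :
    1 / 2 * softThreshold l z ^ 2 - softThreshold l z * z + l * |softThreshold l z|
        + 1 / 2 * (t - softThreshold l z) ^ 2
      ≤ 1 / 2 * t ^ 2 - t * z + l * |t| := by
  have subgradient_le : (z - softThreshold l z) * t ≤ l * |t| := calc
    (z - softThreshold l z) * t ≤ |z - softThreshold l z| * |t| :=
      (le_abs_self _).trans_eq (abs_mul _ _)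
    _ ≤ l * |t| := by gcongr; exact abs_sub_softThreshold_le hl z
  linarith [sub_softThreshold_mul_softThreshold hl z]

theorem softThreshold_sq_sub_add_mul_abs (hl : 0 ≤ l) (z : ℝ) :
    softThreshold l z ^ 2 - 2 * (softThreshold l z * z) + l * |softThreshold l z|
      = -(|z| * max (|z| - l) 0) := by
  rw [softThreshold_mul_self, softThreshold_sq hl, abs_softThreshold hl]
  rcases max_choice (|z| - l) 0 with h | h <;> rw [h] <;> ring

end SoftThreshold

section Lasso

open scoped InnerProductSpace

variable {ι E : Type*} [Fintype ι] [NormedAddCommGroup E] [InnerProductSpace ℝ E]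

/-- The lasso objective for the predictors `x`, the response `y` and the penalty `l`. -/
def lassoObjective (x : ι → E) (y : E) (l : ℝ) (β : ι → ℝ) : ℝ :=
  1 / 2 * ‖y - ∑ j, β j • x j‖ ^ 2 + l * ∑ j, |β j|

/-- `β` is a lasso estimate: a global minimizer of the lasso objective. -/
def IsLassoSolution (x : ι → E) (y : E) (l : ℝ) (β : ι → ℝ) : Prop :=
  ∀ b, lassoObjective x y l β ≤ lassoObjective x y l b

/-- The penalized residual sum of squares compared by the covariance test. In contrast to
`lassoObjective`, the squared residual is not halved. -/
def penalizedRSS (x : ι → E) (y : E) (l : ℝ) (β : ι → ℝ) : ℝ :=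
  ‖y - ∑ j, β j • x j‖ ^ 2 + l * ∑ j, |β j|

variable {x : ι → E} {y : E} {l : ℝ} {β : ι → ℝ}

theorem norm_sub_sum_smul_sq_of_orthonormal (hx : Orthonormal ℝ x) (y : E) (β : ι → ℝ) :
    ‖y - ∑ j, β j • x j‖ ^ 2 = ‖y‖ ^ 2 + ∑ j, (β j ^ 2 - 2 * (β j * ⟪y, x j⟫_ℝ)) := by
  have norm_sum_sq : ‖∑ j, β j • x j‖ ^ 2 = ∑ j, β j ^ 2 := by
    rw [← real_inner_self_eq_norm_sq, hx.inner_sum]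
    simp [sq]
  simp only [norm_sub_sq_real, norm_sum_sq, inner_sum, real_inner_smul_right,
    Finset.sum_sub_distrib, Finset.mul_sum]
  ring

theorem lassoObjective_of_orthonormal (hx : Orthonormal ℝ x) (y : E) (l : ℝ) (β : ι → ℝ) :
    lassoObjective x y l β
      = 1 / 2 * ‖y‖ ^ 2 + ∑ j, (1 / 2 * β j ^ 2 - β j * ⟪y, x j⟫_ℝ + l * |β j|) := by
  rw [lassoObjective, norm_sub_sum_smul_sq_of_orthonormal hx, mul_add, add_assoc, Finset.mul_sum,
    Finset.mul_sum, ← Finset.sum_add_distrib]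
  congr! 2
  ring

theorem penalizedRSS_of_orthonormal (hx : Orthonormal ℝ x) (y : E) (l : ℝ) (β : ι → ℝ) :
    penalizedRSS x y l β
      = ‖y‖ ^ 2 + ∑ j, (β j ^ 2 - 2 * (β j * ⟪y, x j⟫_ℝ) + l * |β j|) := by
  rw [penalizedRSS, norm_sub_sum_smul_sq_of_orthonormal hx, add_assoc, Finset.mul_sum,
    ← Finset.sum_add_distrib]

theorem lassoObjective_softThreshold_add_sum_sq_le (hx : Orthonormal ℝ x) (y : E) (hl : 0 ≤ l)
    (β : ι → ℝ) :
    lassoObjective x y l (fun j => softThreshold l ⟪y, x j⟫_ℝ)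
        + ∑ j, 1 / 2 * (β j - softThreshold l ⟪y, x j⟫_ℝ) ^ 2
      ≤ lassoObjective x y l β := by
  rw [lassoObjective_of_orthonormal hx, lassoObjective_of_orthonormal hx, add_assoc,
    ← Finset.sum_add_distrib]
  exact add_le_add_right (Finset.sum_le_sum fun j _ =>
    scalar_lasso_softThreshold_add_sq_le hl ⟪y, x j⟫_ℝ (β j)) _

namespace IsLassoSolution

theorem eq_softThreshold (hβ : IsLassoSolution x y l β) (hx : Orthonormal ℝ x) (hl : 0 ≤ l)
    (j : ι) : β j = softThreshold l ⟪y, x j⟫_ℝ := by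
  have sum_sq_le : ∑ j, 1 / 2 * (β j - softThreshold l ⟪y, x j⟫_ℝ) ^ 2 ≤ 0 := by
    linarith [lassoObjective_softThreshold_add_sum_sq_le hx y hl β,
      hβ fun j => softThreshold l ⟪y, x j⟫_ℝ]
  have half_sq_le : 1 / 2 * (β j - softThreshold l ⟪y, x j⟫_ℝ) ^ 2 ≤ 0 :=
    (Finset.single_le_sum (f := fun j => 1 / 2 * (β j - softThreshold l ⟪y, x j⟫_ℝ) ^ 2)
      (fun _ _ => by positivity) (Finset.mem_univ j)).trans sum_sq_le
  exact sub_eq_zero.1 (sq_nonpos_iff _ |>.1 (by linarith))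

theorem penalizedRSS_eq (hβ : IsLassoSolution x y l β) (hx : Orthonormal ℝ x) (hl : 0 ≤ l) :
    penalizedRSS x y l β = ‖y‖ ^ 2 - ∑ j, |⟪y, x j⟫_ℝ| * max (|⟪y, x j⟫_ℝ| - l) 0 := by
  simp only [penalizedRSS_of_orthonormal hx, hβ.eq_softThreshold hx hl,
    softThreshold_sq_sub_add_mul_abs hl, Finset.sum_neg_distrib, ← sub_eq_add_neg]

end IsLassoSolution

theorem penalizedRSS_restrict_sub_penalizedRSS [DecidableEq ι] (hx : Orthonormal ℝ x) (hl : 0 ≤ l)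
    {A : Finset ι} {b : ι} (hbA : b ∉ A) (hb : l ≤ |⟪y, x b⟫_ℝ|)
    (hle : ∀ j ∉ insert b A, |⟪y, x j⟫_ℝ| ≤ l) {βA : A → ℝ}
    (hβA : IsLassoSolution (fun j : A => x j) y l βA) (hβ : IsLassoSolution x y l β) :
    penalizedRSS (fun j : A => x j) y l βA - penalizedRSS x y l β
      = |⟪y, x b⟫_ℝ| * (|⟪y, x b⟫_ℝ| - l) := by
  let term j := |⟪y, x j⟫_ℝ| * max (|⟪y, x j⟫_ℝ| - l) 0
  have sum_term : ∑ j, term j = term b + ∑ j ∈ A, term j := by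
    rw [← Finset.sum_insert hbA]
    refine (Finset.sum_subset (Finset.subset_univ _) fun j _ hj => ?_).symm
    simp [term, hle j hj]
  have term_b : term b = |⟪y, x b⟫_ℝ| * (|⟪y, x b⟫_ℝ| - l) := by
    simp [term, hb]
  rw [hβA.penalizedRSS_eq (hx.comp _ Subtype.val_injective) hl, hβ.penalizedRSS_eq hx hl,
    Finset.sum_coe_sort A term, sum_term, term_b]
  ring

end Lasso

section TopSet

variable {ι α : Type*}

/-- `S` consists of indices of the `#S` largest values of `f`, with ties broken arbitrarily. -/
def IsTopSet [LE α] (f : ι → α) (S : Finset ι) : Prop :=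
  ∀ i ∈ S, ∀ j ∉ S, f j ≤ f i

namespace IsTopSet

theorem of_forall_lt [Preorder α] {f : ι → α} {S : Finset ι}
    (h : ∀ i ∈ S, ∀ j ∉ S, f j < f i) : IsTopSet f S :=
  fun i hi j hj => (h i hi j hj).le

theorem inf'_le_inf'_of_card_le [SemilatticeInf α] {f : ι → α} {S T : Finset ι}
    (hS : IsTopSet f S) (hcard : S.card ≤ T.card) (hSne : S.Nonempty) (hTne : T.Nonempty) :
    T.inf' hTne f ≤ S.inf' hSne f := by
  refine Finset.le_inf' _ _ fun i hi => ?_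
  by_cases hiT : i ∈ T
  · exact Finset.inf'_le f hiT
  · obtain ⟨t, htT, htS⟩ : ∃ t ∈ T, t ∉ S := by
      by_contra! hTS
      exact hiT (Finset.eq_of_subset_of_card_le hTS hcard ▸ hi)
    exact (Finset.inf'_le f htT).trans (hS i hi t htS)

theorem inf'_insert_eq [DecidableEq ι] [SemilatticeInf α] {f : ι → α} {S : Finset ι}
    (hS : IsTopSet f S) {t : ι} (ht : t ∉ S) :
    (insert t S).inf' (Finset.insert_nonempty t S) f = f t :=
  le_antisymm (Finset.inf'_le _ (Finset.mem_insert_self t S)) <|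
    Finset.le_inf' _ _ <| Finset.forall_mem_insert .. |>.2 ⟨le_rfl, fun i hi => hS i hi t ht⟩

theorem exists_insert [Finite ι] [DecidableEq ι] [LinearOrder α] {f : ι → α} {S : Finset ι}
    (hS : IsTopSet f S) (hne : ∃ t, t ∉ S) : ∃ t ∉ S, IsTopSet f (insert t S) := by
  obtain ⟨t, htS, ht_max⟩ :=
    Set.exists_max_image {t | t ∉ S} f (Set.toFinite _) hne
  refine ⟨t, htS, fun i hi j hj => ?_⟩
  rw [Finset.mem_insert, not_or] at hj
  rcases Finset.mem_insert.1 hi with rfl | hi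
  · exact ht_max j hj.2
  · exact hS i hi j hj.2

theorem exists_insert_inf'_eq [Finite ι] [DecidableEq ι] [LinearOrder α] {f : ι → α}
    {S T : Finset ι} (hS : IsTopSet f S) (hT : IsTopSet f T) (hcard : T.card = S.card + 1)
    (hne : T.Nonempty) : ∃ t ∉ S, IsTopSet f (insert t S) ∧ T.inf' hne f = f t := by
  obtain ⟨s, -, hsS⟩ := Finset.exists_mem_notMem_of_card_lt_card (s := S) (t := T) (by lia)
  obtain ⟨t, htS, htop⟩ := hS.exists_insert ⟨s, hsS⟩
  have card_insert : (insert t S).card = T.card := by rw [Finset.card_insert_of_notMem htS, hcard]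
  refine ⟨t, htS, htop, ?_⟩
  rw [← hS.inf'_insert_eq htS]
  exact le_antisymm (htop.inf'_le_inf'_of_card_le card_insert.le _ _)
    (hT.inf'_le_inf'_of_card_le card_insert.ge _ _)

end IsTopSet

end TopSet

section Euclidean

theorem orthonormal_toLp_col {m ι : Type*} [Fintype m] [DecidableEq ι] {X : Matrix m ι ℝ}
    (hX : X.transpose * X = 1) : Orthonormal ℝ fun j => WithLp.toLp 2 (X.col j) := by
  rw [orthonormal_iff_ite]
  intro j k
  rw [← Matrix.one_apply, ← hX]
  simp [EuclideanSpace.inner_toLp_toLp, Matrix.mul_apply, dotProduct, mul_comm]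

variable {n : ℕ}

theorem ip_eq_inner (a b : Fin n → ℝ) : ip a b = inner ℝ (WithLp.toLp 2 a) (WithLp.toLp 2 b) := by
  simp [ip, EuclideanSpace.inner_toLp_toLp, dotProduct, mul_comm]

theorem norm_toLp_sub_sum_smul_sq {ι : Type*} [Fintype ι] (y : Fin n → ℝ) (x : ι → Fin n → ℝ)
    (β : ι → ℝ) :
    ‖WithLp.toLp 2 y - ∑ j, β j • WithLp.toLp 2 (x j)‖ ^ 2
      = sqnorm fun i => y i - ∑ j, β j * x j i := by
  simp [EuclideanSpace.real_norm_sq_eq, sqnorm]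

end Euclidean

open scoped InnerProductSpace in
theorem covariance_test_statistic_orthonormal_general {ι E : Type*} [Fintype ι]
    [NormedAddCommGroup E] [InnerProductSpace ℝ E] {x : ι → E} (hx : Orthonormal ℝ x) {y : E}
    {A B C : Finset ι} (hAB : B.card = A.card + 1) (hBC : C.card = B.card + 1)
    (hA : IsTopSet (fun j => |⟪y, x j⟫_ℝ|) A) (hB : IsTopSet (fun j => |⟪y, x j⟫_ℝ|) B)
    (hC : IsTopSet (fun j => |⟪y, x j⟫_ℝ|) C) (hBne : B.Nonempty) (hCne : C.Nonempty)
    {lamk lamk1 : ℝ} (hlamk : lamk = B.inf' hBne fun j => |⟪y, x j⟫_ℝ|)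
    (hlamk1 : lamk1 = C.inf' hCne fun j => |⟪y, x j⟫_ℝ|)
    {βA : A → ℝ} (hβA : IsLassoSolution (fun j : A => x j) y lamk1 βA)
    {βhat : ι → ℝ} (hβhat : IsLassoSolution x y lamk1 βhat) :
    penalizedRSS (fun j : A => x j) y lamk1 βA - penalizedRSS x y lamk1 βhat
      = lamk ^ 2 - lamk * lamk1 := by
  classical
  obtain ⟨b, hbA, topAb, hb⟩ := hA.exists_insert_inf'_eq hB hAB hBne
  obtain ⟨c, hcAb, topAbc, hc⟩ :=
    topAb.exists_insert_inf'_eq hC (by rw [hBC, hAB, Finset.card_insert_of_notMem hbA]) hCne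
  obtain rfl := hlamk.trans hb
  obtain rfl := hlamk1.trans hc
  have le_of_notMem : ∀ j ∉ insert b A, |⟪y, x j⟫_ℝ| ≤ |⟪y, x c⟫_ℝ| := by
    intro j hj
    rcases eq_or_ne j c with rfl | hjc
    · exact le_rfl
    · exact topAbc c (Finset.mem_insert_self _ _) j (mt (Finset.mem_of_mem_insert_of_ne · hjc) hj)
  rw [penalizedRSS_restrict_sub_penalizedRSS hx (abs_nonneg _) hbA
    (topAb b (Finset.mem_insert_self _ _) c hcAb) le_of_notMem hβA hβhat]
  ring

/-- Orthonormal design: the covariance test statistic at the `(k+1)`-st knot, comparing the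
full Lasso at `λ = λ̂_{k+1}` with the Lasso restricted to the top-`(k−1)` set `Â_{k−1}`,
equals `(λ̂_k² − λ̂_k λ̂_{k+1})/σ²`. -/
theorem covariance_test_statistic_orthonormal
    {n p : ℕ} (X : Matrix (Fin n) (Fin p) ℝ)
    (horth : X.transpose * X = 1)
    (y : Fin n → ℝ) (σ : ℝ) (hσ : 0 < σ)
    (z : Fin p → ℝ) (hz : z = fun j => ip y (fun i => X i j))
    (hdist : ∀ j k : Fin p, j ≠ k → |z j| ≠ |z k|)
    (k : ℕ) (hk1 : 1 ≤ k) (hkp : k + 1 ≤ p)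
    (A B C : Finset (Fin p))
    (hAcard : A.card = k - 1) (hBcard : B.card = k) (hCcard : C.card = k + 1)
    (hA : ∀ i ∈ A, ∀ j ∉ A, |z j| < |z i|)
    (hB : ∀ i ∈ B, ∀ j ∉ B, |z j| < |z i|)
    (hC : ∀ i ∈ C, ∀ j ∉ C, |z j| < |z i|)
    (hBne : B.Nonempty) (hCne : C.Nonempty)
    (lamk : ℝ) (hlamk : lamk = B.inf' hBne fun j => |z j|)
    (lamk1 : ℝ) (hlamk1 : lamk1 = C.inf' hCne fun j => |z j|)
    (βA : A → ℝ)
    (hβA : ∀ b : A → ℝ,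
      (1 / 2) * sqnorm (fun i => y i - ∑ j : A, βA j * X i j.1) + lamk1 * ∑ j : A, |βA j|
        ≤ (1 / 2) * sqnorm (fun i => y i - ∑ j : A, b j * X i j.1) + lamk1 * ∑ j : A, |b j|)
    (βhat : Fin p → ℝ)
    (hβhat : ∀ β : Fin p → ℝ,
      (1 / 2) * sqnorm (fun i => y i - ∑ j, βhat j * X i j) + lamk1 * ∑ j, |βhat j|
        ≤ (1 / 2) * sqnorm (fun i => y i - ∑ j, β j * X i j) + lamk1 * ∑ j, |β j|) :
    ((sqnorm (fun i => y i - ∑ j : A, βA j * X i j.1) + lamk1 * ∑ j : A, |βA j|)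
      - (sqnorm (fun i => y i - ∑ j, βhat j * X i j) + lamk1 * ∑ j, |βhat j|)) / σ ^ 2
    = (lamk ^ 2 - lamk * lamk1) / σ ^ 2 := by
  simp only [hz, ip_eq_inner] at hA hB hC hlamk hlamk1
  simp only [← norm_toLp_sub_sum_smul_sq y fun j i => X i j,
    ← norm_toLp_sub_sum_smul_sq y fun (j : A) i => X i j] at hβA hβhat ⊢
  exact congrArg (· / σ ^ 2) (covariance_test_statistic_orthonormal_general
    (orthonormal_toLp_col horth) (by lia) (by lia) (.of_forall_lt hA) (.of_forall_lt hB)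
    (.of_forall_lt hC) hBne hCne hlamk hlamk1 hβA hβhat)
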